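/- Let E, H, U be complex Hilbert spaces, E₀ ⊆ E with dense and continuous embedding, and L ∈ L(E₀,H), K ∈ L(E₀,U) such that the operator (L,K) : E₀ ⊆ E → H ⊕ U is closed. Define the operator A on E ⊕ H with domain D(A) := {(u,w) ∈ E₀ × H : K^⋄Ku − L^⋄w ∈ E} by A(u,w) := (K^⋄Ku − L^⋄w, Lu), where K^⋄Ku − L^⋄w ∈ E denotes the unique e ∈ E with ⟨e,x⟩_E = ⟨Ku,Kx⟩_U − ⟨w,Lx⟩_H for all x ∈ E₀. Then A (viewed as a relation, namely its graph {((u,w),A(u,w)) : (u,w) ∈ D(A)} ⊆ (E⊕H) ⊕ (E⊕H)) is maximal monotone. -/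

import Mathlib

/-!
By Minty's criterion a monotone relation `C` is maximal as soon as `1 + C` is onto. Here
monotonicity is the energy identity `Re ⟪(u, w), A (u, w)⟫ = ‖K u‖²`. Eliminating `w` from
`(1 + A) (u, w) = (f, g)` leaves `⟪f - j u, j x⟫ + ⟪g - L u, L x⟫ + ⟪0 - K u, K x⟫ = 0` for all
`x ∈ E₀`, i.e. `(j u, L u, K u)` is the orthogonal projection of `(f, g, 0)` onto the graph of
`(L, K)`, which exists because that graph is closed.
-/

open scoped ComplexInnerProductSpace
open Filter Topology

noncomputable section

variable {E H U E₀ : Type*}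
  [NormedAddCommGroup E] [InnerProductSpace ℂ E] [CompleteSpace E]
  [NormedAddCommGroup H] [InnerProductSpace ℂ H] [CompleteSpace H]
  [NormedAddCommGroup U] [InnerProductSpace ℂ U] [CompleteSpace U]
  [NormedAddCommGroup E₀] [InnerProductSpace ℂ E₀] [CompleteSpace E₀]

/-- Monotonicity of a relation on the Hilbert space `E ⊕ H` (the real part of the inner
product of `E ⊕ H` is the sum of the real parts of the component inner products). -/
def IsMonotoneRelProd (C : Set ((E × H) × (E × H))) : Prop :=
  ∀ p ∈ C, ∀ q ∈ C,
    0 ≤ ((⟪p.1.1 - q.1.1, p.2.1 - q.2.1⟫ : ℂ) + ⟪p.1.2 - q.1.2, p.2.2 - q.2.2⟫).re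

/-- Maximal monotonicity of a relation on `E ⊕ H`. -/
def IsMaximalMonotoneRelProd (C : Set ((E × H) × (E × H))) : Prop :=
  IsMonotoneRelProd C ∧
    ∀ B : Set ((E × H) × (E × H)), IsMonotoneRelProd B → C ⊆ B → B = C

/-- Closedness of the operator `(L,K) : E₀ ⊆ E → H ⊕ U`: whenever `wₙ` in `E₀` with `wₙ → w`
in `E`, `Lwₙ → v` in `H` and `Kwₙ → z` in `U`, then `w ∈ E₀`, `Lw = v` and `Kw = z`. -/
def ClosedLK (j : E₀ →L[ℂ] E) (L : E₀ →L[ℂ] H) (K : E₀ →L[ℂ] U) : Prop :=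
  ∀ (f : ℕ → E₀) (w : E) (v : H) (z : U),
    Tendsto (fun n => j (f n)) atTop (nhds w) →
    Tendsto (fun n => L (f n)) atTop (nhds v) →
    Tendsto (fun n => K (f n)) atTop (nhds z) →
    ∃ w₀ : E₀, j w₀ = w ∧ L w₀ = v ∧ K w₀ = z

section Projection

variable {𝕜 X Y Z : Type*} [RCLike 𝕜]
  [NormedAddCommGroup X] [InnerProductSpace 𝕜 X]
  [NormedAddCommGroup Y] [InnerProductSpace 𝕜 Y]
  [NormedAddCommGroup Z] [InnerProductSpace 𝕜 Z]

/-- The identification of the Hilbert sum `X ⊕ Y ⊕ Z`, encoded as a nested `L²`-product, with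
the product `X × Y × Z`, whose sup norm does not come from an inner product. -/
def hilbertSumEquivProd :
    WithLp 2 (X × WithLp 2 (Y × Z)) ≃L[𝕜] X × Y × Z :=
  (WithLp.prodContinuousLinearEquiv 2 𝕜 X (WithLp 2 (Y × Z))).trans
    ((ContinuousLinearEquiv.refl 𝕜 X).prodCongr (WithLp.prodContinuousLinearEquiv 2 𝕜 Y Z))

lemma exists_mem_forall_inner_sub_eq_zero_of_isComplete (S : Submodule 𝕜 (X × Y × Z))
    (hS : IsComplete (S : Set (X × Y × Z))) (z : X × Y × Z) :
    ∃ p ∈ S, ∀ x ∈ S, inner 𝕜 (z.1 - p.1) x.1 +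
      (inner 𝕜 (z.2.1 - p.2.1) x.2.1 + inner 𝕜 (z.2.2 - p.2.2) x.2.2) = 0 := by
  let e : WithLp 2 (X × WithLp 2 (Y × Z)) ≃L[𝕜] X × Y × Z := hilbertSumEquivProd
  let T : Submodule 𝕜 (WithLp 2 (X × WithLp 2 (Y × Z))) := S.map e.symm.toLinearMap
  have hT : IsComplete (T : Set (WithLp 2 (X × WithLp 2 (Y × Z)))) :=
    (isComplete_image_iff e.symm.isUniformEmbedding.isUniformInducing).2 hS
  have : CompleteSpace T := hT.completeSpace_coe
  obtain ⟨_, ⟨p, hp, rfl⟩, horth⟩ :=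
    Submodule.HasOrthogonalProjection.exists_orthogonal (K := T) (e.symm z)
  refine ⟨p, hp, fun x hx => ?_⟩
  exact (T.mem_orthogonal' _).1 horth (e.symm x) (Submodule.mem_map_of_mem hx)

end Projection

section Minty

omit [CompleteSpace E] [CompleteSpace H]

lemma IsMonotoneRelProd.injOn_add {C : Set ((E × H) × (E × H))} (hC : IsMonotoneRelProd C) :
    Set.InjOn (fun p => p.1 + p.2) C := by
  rintro ⟨⟨a, b⟩, ⟨c, d⟩⟩ hp ⟨⟨a', b'⟩, ⟨c', d'⟩⟩ hq hpq
  obtain ⟨hac, hbd⟩ : a + c = a' + c' ∧ b + d = b' + d' := Prod.mk.inj hpq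
  have hc : c - c' = -(a - a') := by rw [neg_sub, sub_eq_sub_iff_add_eq_add, add_comm, hac]
  have hd : d - d' = -(b - b') := by rw [neg_sub, sub_eq_sub_iff_add_eq_add, add_comm, hbd]
  have hnorm : 0 ≤ -(‖a - a'‖ ^ 2 + ‖b - b'‖ ^ 2) := by
    have hmono := hC _ hp _ hq
    simp only [hc, hd, inner_neg_right, Complex.add_re, Complex.neg_re] at hmono
    rw [← inner_self_eq_norm_sq (𝕜 := ℂ), ← inner_self_eq_norm_sq (𝕜 := ℂ), neg_add]
    exact hmono
  obtain ⟨ha, hb⟩ := (add_eq_zero_iff_of_nonneg (sq_nonneg _) (sq_nonneg _)).1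
    (le_antisymm (neg_nonneg.1 hnorm) (by positivity))
  rw [sq_eq_zero_iff, norm_eq_zero, sub_eq_zero] at ha hb
  subst ha hb
  rw [add_left_cancel hac, add_left_cancel hbd]

lemma IsMonotoneRelProd.isMaximalMonotoneRelProd {C : Set ((E × H) × (E × H))}
    (hC : IsMonotoneRelProd C) (hsurj : Set.SurjOn (fun p => p.1 + p.2) C Set.univ) :
    IsMaximalMonotoneRelProd C := by
  refine ⟨hC, fun B hB hCB => Set.Subset.antisymm (fun p hp => ?_) hCB⟩
  obtain ⟨q, hq, hqp⟩ := hsurj (Set.mem_univ (p.1 + p.2))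
  exact hB.injOn_add (hCB hq) hp hqp ▸ hq

end Minty

section StaffansWeiss

omit [CompleteSpace E] [CompleteSpace H] [CompleteSpace U] [CompleteSpace E₀]

variable {V : Type*} [AddCommGroup V] [Module ℂ V]

/-- The relation `{((j u, w), (K^⋄Ku - L^⋄w, Lu))}` on `E ⊕ H`, where membership of
`K^⋄Ku - L^⋄w` in `E` is tested against the vectors `j x`. It is the graph of an operator when
`j` has dense range and is injective. -/
def staffansWeissRel (j : V →ₗ[ℂ] E) (L : V →ₗ[ℂ] H) (K : V →ₗ[ℂ] U) :
    Set ((E × H) × (E × H)) :=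
  {q | ∃ u : V, j u = q.1.1 ∧ q.2.2 = L u ∧
    ∀ x : V, (⟪q.2.1, j x⟫ : ℂ) = ⟪K u, K x⟫ - ⟪q.1.2, L x⟫}

lemma closedLK_iff_isClosed_range {j : E₀ →L[ℂ] E} {L : E₀ →L[ℂ] H} {K : E₀ →L[ℂ] U} :
    ClosedLK j L K ↔ IsClosed (Set.range fun u => (j u, L u, K u)) := by
  rw [← isSeqClosed_iff_isClosed]
  constructor
  · intro h y z hy hyz
    choose f hf using hy
    obtain rfl : (fun n => (j (f n), L (f n), K (f n))) = y := funext hf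
    obtain ⟨u, hj, hL, hK⟩ := h f z.1 z.2.1 z.2.2 hyz.fst_nhds hyz.snd_nhds.fst_nhds
      hyz.snd_nhds.snd_nhds
    exact ⟨u, Prod.ext hj (Prod.ext hL hK)⟩
  · intro h f w v z hw hv hz
    obtain ⟨u, hu⟩ := h (fun n => Set.mem_range_self (f n))
      (hw.prodMk_nhds (hv.prodMk_nhds hz))
    simp only [Prod.mk.injEq] at hu
    exact ⟨u, hu⟩

variable {j : V →ₗ[ℂ] E} {L : V →ₗ[ℂ] H} {K : V →ₗ[ℂ] U}

lemma sub_mem_staffansWeissRel {p q : (E × H) × (E × H)} (hp : p ∈ staffansWeissRel j L K)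
    (hq : q ∈ staffansWeissRel j L K) : p - q ∈ staffansWeissRel j L K := by
  obtain ⟨u, hju, hLu, hu⟩ := hp
  obtain ⟨v, hjv, hLv, hv⟩ := hq
  refine ⟨u - v, by simp [hju, hjv], by simp [hLu, hLv], fun x => ?_⟩
  simp only [Prod.fst_sub, Prod.snd_sub, map_sub, inner_sub_left, hu, hv]
  ring

lemma re_inner_nonneg_of_mem_staffansWeissRel {p : (E × H) × (E × H)}
    (hp : p ∈ staffansWeissRel j L K) :
    0 ≤ ((⟪p.1.1, p.2.1⟫ : ℂ) + ⟪p.1.2, p.2.2⟫).re := by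
  obtain ⟨u, hju, hLu, hu⟩ := hp
  have energy_identity : ((⟪p.1.1, p.2.1⟫ : ℂ) + ⟪p.1.2, p.2.2⟫).re = ‖K u‖ ^ 2 := calc
    ((⟪p.1.1, p.2.1⟫ : ℂ) + ⟪p.1.2, p.2.2⟫).re
    _ = (⟪p.2.1, j u⟫ : ℂ).re + (⟪p.1.2, L u⟫ : ℂ).re := by
      rw [← hju, hLu, Complex.add_re]
      exact congrArg (· + _) (inner_re_symm (𝕜 := ℂ) _ _)
    _ = (⟪K u, K u⟫ : ℂ).re := by rw [hu, Complex.sub_re, sub_add_cancel]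
    _ = ‖K u‖ ^ 2 := inner_self_eq_norm_sq (𝕜 := ℂ) _
  exact energy_identity ▸ sq_nonneg ‖K u‖

variable (j L K) in
lemma isMonotoneRelProd_staffansWeissRel : IsMonotoneRelProd (staffansWeissRel j L K) :=
  fun _ hp _ hq => re_inner_nonneg_of_mem_staffansWeissRel (sub_mem_staffansWeissRel hp hq)

lemma surjOn_add_staffansWeissRel
    (hcomplete : IsComplete (Set.range fun u => (j u, L u, K u))) :
    Set.SurjOn (fun p => p.1 + p.2) (staffansWeissRel j L K) Set.univ := by
  rintro ⟨f, g⟩ -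
  obtain ⟨_, ⟨u, rfl⟩, horth⟩ := exists_mem_forall_inner_sub_eq_zero_of_isComplete
    (LinearMap.range (j.prod (L.prod K))) hcomplete (f, g, 0)
  refine ⟨((j u, g - L u), (f - j u, L u)), ⟨u, rfl, rfl, fun x => ?_⟩, by simp⟩
  have hx : (⟪f - j u, j x⟫ : ℂ) + (⟪g - L u, L x⟫ + ⟪0 - K u, K x⟫) = 0 :=
    horth _ (LinearMap.mem_range_self _ x)
  rw [zero_sub, inner_neg_left] at hx
  linear_combination hx

theorem staffans_maximal_monotone_general
    (j : V →ₗ[ℂ] E) (L : V →ₗ[ℂ] H) (K : V →ₗ[ℂ] U)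
    (hcomplete : IsComplete (Set.range fun u => (j u, L u, K u))) :
    IsMaximalMonotoneRelProd (staffansWeissRel j L K) :=
  (isMonotoneRelProd_staffansWeissRel j L K).isMaximalMonotoneRelProd
    (surjOn_add_staffansWeissRel hcomplete)

end StaffansWeiss

/-- **[Staffans–Weiss 2012, Theorem 1.4].** Let `E₀ ⊆ E` with dense and continuous embedding
`j` and let `L ∈ L(E₀,H)`, `K ∈ L(E₀,U)` with `(L,K) : E₀ ⊆ E → H ⊕ U` closed. The operator
`A(u,w) := (K^⋄Ku − L^⋄w, Lu)` with domain `D(A) = {(u,w) ∈ E₀ × H : K^⋄Ku − L^⋄w ∈ E}`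
(where `e = K^⋄Ku − L^⋄w ∈ E` means `⟪e,x⟫_E = ⟪Ku,Kx⟫_U − ⟪w,Lx⟫_H` for all `x ∈ E₀`),
viewed as a relation on `E ⊕ H` via its graph, is maximal monotone. -/
theorem staffans_maximal_monotone (j : E₀ →L[ℂ] E) (hj_inj : Function.Injective j)
    (hj_dense : DenseRange j) (L : E₀ →L[ℂ] H) (K : E₀ →L[ℂ] U)
    (hclosed : ClosedLK j L K) :
    IsMaximalMonotoneRelProd
      {q : (E × H) × (E × H) | ∃ u : E₀, j u = q.1.1 ∧ q.2.2 = L u ∧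
        ∀ x : E₀, (⟪q.2.1, j x⟫ : ℂ) = ⟪K u, K x⟫ - ⟪q.1.2, L x⟫} := by
  exact staffans_maximal_monotone_general j.toLinearMap L.toLinearMap K.toLinearMap
    (closedLK_iff_isClosed_range.1 hclosed).isComplete
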